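/- For every fixed lambda term M₀, the density among plain lambda terms of terms that contain M₀ as a subterm is 1: the sequence n ↦ (number of lambda terms t of size n such that M₀ is a subterm of t) / L n converges to 1 as n → ∞. -/

import Mathlib

/-- Lambda terms with de Bruijn indices. -/
inductive Term : Type
  | var : ℕ → Term
  | app : Term → Term → Term
  | abs : Term → Term

namespace Term

/-- Natural size: every operator (zero, successor, application, abstraction) has size 1. -/
def size : Term → ℕ
  | var k => k + 1
  | app M N => M.size + N.size + 1
  | abs M => M.size + 1

end Term

/-- `L n` is the number of lambda terms of size `n`. -/
noncomputable def L (n : ℕ) : ℕ := Nat.card {t : Term // t.size = n}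


/-- Direct subterms: `M` is a direct subterm of `abs M`; `M` and `N` are direct
subterms of `app M N`. -/
inductive DirectSubterm : Term → Term → Prop
  | abs (M : Term) : DirectSubterm M (Term.abs M)
  | appLeft (M N : Term) : DirectSubterm M (Term.app M N)
  | appRight (M N : Term) : DirectSubterm N (Term.app M N)

/-- The subterm relation: reflexive-transitive closure of the direct-subterm relation. -/
def Subterm : Term → Term → Prop := Relation.ReflTransGen DirectSubterm

/-!
The generating function `T` of all terms satisfies `T = x (1 / (1 - x) + T + T ^ 2)`. For the
generating function `B` of the terms avoiding a fixed `M₀` the recurrence is the same, except that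
`M₀` itself, whose direct subterms avoid `M₀`, is not counted:
`B = x (1 / (1 - x) - x ^ (|M₀| - 1) + B + B ^ 2)`. A solution of `y = x (C + y + y ^ 2)` forces the
discriminant `(1 - x) ^ 2 - 4 x ^ 2 C` to be nonnegative, and conversely a nonnegative discriminant
makes `(1 - x) / (2 x)` an upper bound for the partial sums. Excluding `M₀` strictly increases the
discriminant, so at a point `r` where the discriminant for `B` vanishes the one for `T` is negative:
`B` converges at `r` while `T` diverges already at some `x < r`. Since the coefficients of `T` are
monotone and, up to a shift, supermultiplicative, divergence at `x` yields a lower bound of order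
`q⁻¹ ^ n`, `x < q < r`, on the coefficients of `T`, against an upper bound of order `r⁻¹ ^ n` on
those of `B`.
-/

open Asymptotics Filter Finset Topology

/-! ### Growth of supermultiplicative sequences -/

lemma exists_one_le_mul_pow_of_not_summable {a : ℕ → ℝ} {x q : ℝ} (ha : 0 ≤ a) (hx : 0 ≤ x)
    (hxq : x < q) (hsum : ¬ Summable fun n ↦ a n * x ^ n) : ∃ m, 1 ≤ a m * q ^ (m + 1) := by
  have hq : 0 < q := hx.trans_lt hxq
  contrapose! hsum
  refine .of_nonneg_of_le (fun n ↦ mul_nonneg (ha n) (by positivity)) (fun n ↦ ?_)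
    ((summable_geometric_of_lt_one (div_nonneg hx hq.le) ((div_lt_one hq).2 hxq)).mul_left q⁻¹)
  calc a n * x ^ n = q⁻¹ * (x / q) ^ n * (a n * q ^ (n + 1)) := by rw [div_pow]; field_simp; ring
    _ ≤ q⁻¹ * (x / q) ^ n := mul_le_of_le_one_right (by positivity) (hsum n).le

lemma pow_le_mul_pow_of_one_le {a : ℕ → ℝ} {q : ℝ} {m : ℕ} (ha : 0 ≤ a) (hmono : Monotone a)
    (hmul : ∀ i j, a i * a j ≤ a (i + j + 1)) (hq0 : 0 ≤ q) (hq1 : q ≤ 1)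
    (hm : 1 ≤ a m * q ^ (m + 1)) (n : ℕ) (hmn : m ≤ n) : q ^ m ≤ a n * q ^ n := by
  induction n using Nat.strong_induction_on with
  | _ n ih =>
    obtain hn | hn := le_or_gt n (2 * m)
    · calc q ^ m ≤ a m * q ^ (m + 1) * q ^ m := le_mul_of_one_le_left (by positivity) hm
        _ = a m * q ^ (2 * m + 1) := by ring
        _ ≤ a n * q ^ n :=
          mul_le_mul (hmono hmn) (pow_le_pow_of_le_one hq0 hq1 (by lia)) (by positivity) (ha n)
    · obtain ⟨k, rfl⟩ : ∃ k, n = k + m + 1 := ⟨n - m - 1, by lia⟩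
      have hk : q ^ m ≤ a k * q ^ k := ih k (by lia) (by lia)
      calc q ^ m ≤ a k * q ^ k * (a m * q ^ (m + 1)) :=
            hk.trans <| le_mul_of_one_le_right ((pow_nonneg hq0 m).trans hk) hm
        _ = a k * a m * q ^ (k + m + 1) := by ring
        _ ≤ a (k + m + 1) * q ^ (k + m + 1) := by gcongr; exact hmul k m

lemma inv_pow_isLittleO_of_not_summable {a : ℕ → ℝ} {x r : ℝ} (ha : 0 ≤ a) (hmono : Monotone a)
    (hmul : ∀ i j, a i * a j ≤ a (i + j + 1)) (hx : 0 ≤ x) (hxr : x < r) (hr : r ≤ 1)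
    (hsum : ¬ Summable fun n ↦ a n * x ^ n) : (fun n ↦ r⁻¹ ^ n) =o[atTop] a := by
  obtain ⟨q, hxq, hqr⟩ := exists_between hxr
  have hq : 0 < q := hx.trans_lt hxq
  obtain ⟨m, hm⟩ := exists_one_le_mul_pow_of_not_summable ha hx hxq hsum
  have lower_bound : (fun n ↦ q⁻¹ ^ n) =O[atTop] a := by
    refine .of_bound (q ^ m)⁻¹ ?_
    filter_upwards [eventually_ge_atTop m] with n hmn
    have := pow_le_mul_pow_of_one_le ha hmono hmul hq.le (hqr.le.trans hr) hm n hmn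
    rw [Real.norm_of_nonneg (by positivity), Real.norm_of_nonneg (ha n), inv_pow]
    field_simp
    linarith
  refine (isLittleO_pow_pow_of_lt_left ?_ ?_).trans_isBigO lower_bound
  · exact inv_nonneg.2 (hq.trans hqr).le
  · exact inv_strictAnti₀ hq hqr

/-! ### Unary-binary recurrences -/

lemma sum_range_sum_antidiagonal_mul_le {R : Type*} [Semiring R] [PartialOrder R]
    [IsOrderedRing R] {f g : ℕ → R} (hf : 0 ≤ f) (hg : 0 ≤ g) (N : ℕ) :
    ∑ n ∈ range N, ∑ p ∈ antidiagonal n, f p.1 * g p.2 ≤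
      (∑ n ∈ range N, f n) * ∑ n ∈ range N, g n := by
  simp_rw [Finset.Nat.sum_antidiagonal_eq_sum_range_succ_mk]
  rw [sum_range_diag_flip N fun i j ↦ f i * g j, sum_mul_sum]
  refine sum_le_sum fun i _ ↦ sum_le_sum_of_subset_of_nonneg ?_ fun j _ _ ↦ mul_nonneg (hf i) (hg j)
  exact range_subset_range.2 (Nat.sub_le N i)

lemma sum_antidiagonal_mul_pow {R : Type*} [CommSemiring R] (a : ℕ → R) (x : R) (n : ℕ) :
    ∑ p ∈ antidiagonal n, a p.1 * x ^ p.1 * (a p.2 * x ^ p.2) =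
      (∑ p ∈ antidiagonal n, a p.1 * a p.2) * x ^ n := by
  rw [sum_mul]
  refine sum_congr rfl fun p hp ↦ ?_
  rw [← mem_antidiagonal.1 hp]
  ring

/-- The recurrence counting unary-binary trees by size, when inner nodes have size `1`: `a n` is the
number of trees of size `n`, and `c n` is the number of leaves of size `n + 1`. -/
structure IsUnaryBinaryCount (c a : ℕ → ℝ) : Prop where
  zero : a 0 = 0
  succ (n : ℕ) : a (n + 1) = c n + a n + ∑ p ∈ antidiagonal n, a p.1 * a p.2

namespace IsUnaryBinaryCount

variable {c a : ℕ → ℝ} {x y C : ℝ}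

lemma nonneg (h : IsUnaryBinaryCount c a) (hc : 0 ≤ c) : 0 ≤ a := by
  intro n
  induction n using Nat.strong_induction_on with
  | _ n ih =>
    cases n with
    | zero => exact h.zero.ge
    | succ n =>
      rw [h.succ]
      refine add_nonneg (add_nonneg (hc n) (ih n n.lt_succ_self)) (sum_nonneg fun p hp ↦ ?_)
      have hp : p.1 + p.2 = n := mem_antidiagonal.1 hp
      exact mul_nonneg (ih p.1 (by lia)) (ih p.2 (by lia))

lemma sum_antidiagonal_nonneg (h : IsUnaryBinaryCount c a) (hc : 0 ≤ c) (n : ℕ) :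
    0 ≤ ∑ p ∈ antidiagonal n, a p.1 * a p.2 :=
  sum_nonneg fun p _ ↦ mul_nonneg (h.nonneg hc p.1) (h.nonneg hc p.2)

lemma apply_le_succ (h : IsUnaryBinaryCount c a) (hc : 0 ≤ c) (n : ℕ) : c n ≤ a (n + 1) := by
  have hn : 0 ≤ a n := h.nonneg hc n
  linarith [h.succ n, h.sum_antidiagonal_nonneg hc n]

lemma monotone (h : IsUnaryBinaryCount c a) (hc : 0 ≤ c) : Monotone a := by
  refine monotone_nat_of_le_succ fun n ↦ ?_
  have hn : 0 ≤ c n := hc n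
  linarith [h.succ n, h.sum_antidiagonal_nonneg hc n]

lemma mul_le (h : IsUnaryBinaryCount c a) (hc : 0 ≤ c) (i j : ℕ) :
    a i * a j ≤ a (i + j + 1) := by
  have hle : a i * a j ≤ ∑ p ∈ antidiagonal (i + j), a p.1 * a p.2 :=
    single_le_sum (f := fun p : ℕ × ℕ ↦ a p.1 * a p.2) (a := (i, j))
      (fun p _ ↦ mul_nonneg (h.nonneg hc p.1) (h.nonneg hc p.2)) (by simp)
  have hcn : 0 ≤ c (i + j) := hc _
  have han : 0 ≤ a (i + j) := h.nonneg hc _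
  linarith [h.succ (i + j)]

lemma succ_mul_pow (h : IsUnaryBinaryCount c a) (x : ℝ) (n : ℕ) :
    a (n + 1) * x ^ (n + 1) = x * (c n * x ^ n + a n * x ^ n +
      ∑ p ∈ antidiagonal n, a p.1 * x ^ p.1 * (a p.2 * x ^ p.2)) := by
  rw [h.succ, sum_antidiagonal_mul_pow]
  ring

lemma tsum_eq (h : IsUnaryBinaryCount c a) (hC : HasSum (fun n ↦ c n * x ^ n) C)
    (ha : Summable fun n ↦ a n * x ^ n) :
    ∑' n, a n * x ^ n =
      x * (C + ∑' n, a n * x ^ n + (∑' n, a n * x ^ n) * ∑' n, a n * x ^ n) := by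
  have hprod := (summable_norm_sum_mul_antidiagonal_of_summable_norm ha.norm ha.norm).of_norm
  have hsucc := (((hC.add ha.hasSum).add hprod.hasSum).mul_left x).tsum_eq
  simp_rw [← h.succ_mul_pow] at hsucc
  rw [tsum_mul_tsum_eq_tsum_sum_antidiagonal_of_summable_norm ha.norm ha.norm, ← hsucc,
    ha.tsum_eq_zero_add, h.zero, zero_mul, zero_add]

lemma discrim_nonneg_of_summable (h : IsUnaryBinaryCount c a)
    (hC : HasSum (fun n ↦ c n * x ^ n) C) (ha : Summable fun n ↦ a n * x ^ n) :
    0 ≤ discrim x (x - 1) (x * C) := by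
  rw [discrim_eq_sq_of_quadratic_eq_zero (x := ∑' n, a n * x ^ n)]
  · positivity
  · linear_combination -h.tsum_eq hC ha

lemma sum_range_le (h : IsUnaryBinaryCount c a) (hc : 0 ≤ c) (hx : 0 ≤ x) (hy : 0 ≤ y)
    (hC : HasSum (fun n ↦ c n * x ^ n) C) (hxy : x * (C + y + y * y) ≤ y) (N : ℕ) :
    ∑ n ∈ range N, a n * x ^ n ≤ y := by
  have hterm : 0 ≤ fun n ↦ a n * x ^ n := fun n ↦ mul_nonneg (h.nonneg hc n) (pow_nonneg hx n)
  induction N with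
  | zero => simpa using hy
  | succ N ih =>
    have hsumC : ∑ n ∈ range N, c n * x ^ n ≤ C :=
      sum_le_hasSum _ (fun n _ ↦ mul_nonneg (hc n) (pow_nonneg hx n)) hC
    have hprod : ∑ n ∈ range N, ∑ p ∈ antidiagonal n, a p.1 * x ^ p.1 * (a p.2 * x ^ p.2) ≤ y * y :=
      (sum_range_sum_antidiagonal_mul_le hterm hterm N).trans <|
        mul_le_mul ih ih (sum_nonneg fun n _ ↦ hterm n) hy
    rw [sum_range_succ', h.zero, zero_mul, add_zero]
    simp_rw [h.succ_mul_pow]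
    rw [← mul_sum, sum_add_distrib, sum_add_distrib]
    exact (by gcongr : _ ≤ x * (C + y + y * y)).trans hxy

lemma isBigO_inv_pow_of_discrim_nonneg (h : IsUnaryBinaryCount c a) (hc : 0 ≤ c) (hx0 : 0 < x)
    (hx1 : x ≤ 1) (hC : HasSum (fun n ↦ c n * x ^ n) C) (hdiscrim : 0 ≤ discrim x (x - 1) (x * C)) :
    a =O[atTop] fun n ↦ x⁻¹ ^ n := by
  -- the minimum point of the quadratic `x y ^ 2 - (1 - x) y + x C`
  set y := (1 - x) / (2 * x) with hy_def
  have hy : 0 ≤ y := div_nonneg (sub_nonneg.2 hx1) (by positivity)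
  have hxy : x * (C + y + y * y) ≤ y := by
    have hdiff : y - x * (C + y + y * y) = discrim x (x - 1) (x * C) / (4 * x) := by
      rw [hy_def, discrim]
      field_simp
      ring
    exact sub_nonneg.1 (hdiff ▸ by positivity)
  refine .of_bound y (.of_forall fun n ↦ ?_)
  have hn : a n * x ^ n ≤ y :=
    (single_le_sum (f := fun k ↦ a k * x ^ k)
      (fun k _ ↦ mul_nonneg (h.nonneg hc k) (by positivity)) (self_mem_range_succ n)).trans
      (h.sum_range_le hc hx0.le hy hC hxy (n + 1))
  rwa [Real.norm_of_nonneg (h.nonneg hc n), Real.norm_of_nonneg (by positivity), inv_pow,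
    ← div_eq_mul_inv, le_div_iff₀ (by positivity)]

end IsUnaryBinaryCount

lemma hasSum_ite_eq_zero_one_mul_pow {x : ℝ} (hx0 : 0 ≤ x) (hx1 : x < 1) (s : ℕ) :
    HasSum (fun n ↦ (if n = s then 0 else 1) * x ^ n) ((1 - x)⁻¹ - x ^ s) := by
  refine ((hasSum_geometric_of_lt_one hx0 hx1).sub (hasSum_ite_eq s (x ^ s))).congr_fun fun n ↦ ?_
  split_ifs with h <;> simp [h]

lemma exists_discrim_eq_zero (s : ℕ) :
    ∃ r ∈ Set.Ioo (0 : ℝ) 1, discrim r (r - 1) (r * ((1 - r)⁻¹ - r ^ s)) = 0 := by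
  have hcont : ContinuousOn (fun r : ℝ ↦ (1 - r) ^ 3 - 4 * r ^ 2 * (1 - r ^ s * (1 - r)))
      (Set.Icc 0 1) := by fun_prop
  obtain ⟨r, hr, hroot⟩ := intermediate_value_Ioo' zero_le_one hcont
    (show (0 : ℝ) ∈ _ by norm_num)
  refine ⟨r, hr, ?_⟩
  have : 1 - r ≠ 0 := (sub_pos.2 hr.2).ne'
  rw [discrim]
  field_simp
  linear_combination hroot

lemma exists_discrim_neg_of_discrim_eq_zero {r : ℝ} (hr : r ∈ Set.Ioo (0 : ℝ) 1) {s : ℕ}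
    (hroot : discrim r (r - 1) (r * ((1 - r)⁻¹ - r ^ s)) = 0) :
    ∃ x ∈ Set.Ioo 0 r, discrim x (x - 1) (x * (1 - x)⁻¹) < 0 := by
  have hneg : discrim r (r - 1) (r * (1 - r)⁻¹) < 0 := by
    have : 0 < 4 * r ^ 2 * r ^ s := by have := hr.1; positivity
    rw [discrim] at hroot ⊢
    linarith
  have hcont : ContinuousAt (fun x : ℝ ↦ discrim x (x - 1) (x * (1 - x)⁻¹)) r := by
    have : 1 - r ≠ 0 := (sub_pos.2 hr.2).ne'
    unfold discrim
    fun_prop (disch := assumption)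
  have hev : ∀ᶠ x in 𝓝[<] r, discrim x (x - 1) (x * (1 - x)⁻¹) < 0 :=
    (hcont.eventually_lt_const hneg).filter_mono nhdsWithin_le_nhds
  obtain ⟨x, hx⟩ := (hev.and (Ioo_mem_nhdsLT hr.1)).exists
  exact ⟨x, hx.2, hx.1⟩

/-! ### Counting terms -/

lemma DirectSubterm.size_lt {M N : Term} (h : DirectSubterm M N) : M.size < N.size := by
  cases h <;> simp only [Term.size] <;> lia

lemma Subterm.size_le {M N : Term} (h : Subterm M N) : M.size ≤ N.size := by
  induction h with
  | refl => exact le_rfl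
  | tail _ hdirect ih => exact ih.trans hdirect.size_lt.le

lemma not_subterm_iff {M t : Term} :
    ¬ Subterm M t ↔ t ≠ M ∧ ∀ u, DirectSubterm u t → ¬ Subterm M u := by
  unfold Subterm
  rw [Relation.ReflTransGen.cases_tail_iff]
  grind

namespace Term

variable {P : Term → Prop}

lemma not_directSubterm_var (u : Term) (k : ℕ) : ¬ DirectSubterm u (var k) := nofun

lemma forall_directSubterm_abs {M : Term} : (∀ u, DirectSubterm u (abs M) → P u) ↔ P M :=
  ⟨fun h ↦ h M (.abs M), by rintro h _ ⟨⟩; exact h⟩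

lemma forall_directSubterm_app {M N : Term} :
    (∀ u, DirectSubterm u (app M N) → P u) ↔ P M ∧ P N :=
  ⟨fun h ↦ ⟨h M (.appLeft M N), h N (.appRight M N)⟩,
    by rintro ⟨hM, hN⟩ _ ⟨⟩ <;> assumption⟩

lemma size_pos (t : Term) : 0 < t.size := by
  cases t <;> exact Nat.succ_pos _

lemma finite_setOf_size_le (n : ℕ) : {t : Term | t.size ≤ n}.Finite := by
  induction n with
  | zero => exact Set.finite_empty.subset fun t ht ↦ (t.size_pos.not_ge ht).elim
  | succ n ih =>
    refine (((Set.finite_Iic n).image var).union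
      ((ih.image abs).union (ih.image2 app ih))).subset ?_
    rintro (k | ⟨M, N⟩ | M) ht <;> simp only [Set.mem_ofPred_eq, size] at ht
    · exact .inl ⟨k, Set.mem_Iic.2 (by lia), rfl⟩
    · exact .inr (.inr ⟨M, Set.mem_ofPred.2 (by lia), N, Set.mem_ofPred.2 (by lia), rfl⟩)
    · exact .inr (.inl ⟨M, Set.mem_ofPred.2 (by lia), rfl⟩)

/-- The finite set of terms of size `n` that satisfy `P`, for counting them. -/
noncomputable def ofSize (P : Term → Prop) (n : ℕ) : Finset Term :=
  ((finite_setOf_size_le n).subset fun _ h ↦ h.2.le : {t : Term | P t ∧ t.size = n}.Finite).toFinset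

@[simp]
lemma mem_ofSize {n : ℕ} {t : Term} : t ∈ ofSize P n ↔ P t ∧ t.size = n := by simp [ofSize]

lemma card_ofSize (P : Term → Prop) (n : ℕ) :
    #(ofSize P n) = Nat.card {t : Term // P t ∧ t.size = n} :=
  (Nat.subtype_card _ fun _ ↦ mem_ofSize).symm

lemma card_ofSize_true (n : ℕ) : #(ofSize (fun _ ↦ True) n) = L n := by
  simp [card_ofSize, L]

lemma card_ofSize_add_card_ofSize_not (P : Term → Prop) (n : ℕ) :
    #(ofSize P n) + #(ofSize (fun t ↦ ¬ P t) n) = L n := by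
  classical
  have hdisj : Disjoint (ofSize P n) (ofSize (fun t ↦ ¬ P t) n) := by
    simp +contextual [Finset.disjoint_left]
  have hunion : ofSize P n ∪ ofSize (fun t ↦ ¬ P t) n = ofSize (fun _ ↦ True) n := by
    ext t
    simp [← or_and_right, em]
  rw [← card_union_of_disjoint hdisj, hunion, card_ofSize_true]

lemma ofSize_zero (P : Term → Prop) : ofSize P 0 = ∅ := by
  ext t
  simp [t.size_pos.ne']

lemma card_biUnion_antidiagonal_ofSize [DecidableEq Term] (P : Term → Prop) (n : ℕ) :
    #((antidiagonal n).biUnion fun p ↦ ofSize P p.1 ×ˢ ofSize P p.2) =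
      ∑ p ∈ antidiagonal n, #(ofSize P p.1) * #(ofSize P p.2) := by
  simp_rw [← card_product]
  refine card_biUnion fun p _ p' _ hne ↦ Finset.disjoint_left.2 fun t ht ht' ↦ hne ?_
  simp only [mem_product, mem_ofSize] at ht ht'
  exact Prod.ext (ht.1.2.symm.trans ht'.1.2) (ht.2.2.symm.trans ht'.2.2)

lemma ofSize_forall_directSubterm_succ [DecidableEq Term] (P : Term → Prop) (n : ℕ) :
    ofSize (fun t ↦ ∀ u, DirectSubterm u t → P u) (n + 1) =
      insert (var n) ((ofSize P n).image abs ∪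
        ((antidiagonal n).biUnion fun p ↦ ofSize P p.1 ×ˢ ofSize P p.2).image
          (Function.uncurry app)) := by
  ext t
  cases t with
  | var k => simp [size, not_directSubterm_var]
  | abs M => simp [size, forall_directSubterm_abs]
  | app M N => simp [size, forall_directSubterm_app, and_assoc, and_comm, and_left_comm]

lemma card_ofSize_forall_directSubterm_succ (P : Term → Prop) (n : ℕ) :
    #(ofSize (fun t ↦ ∀ u, DirectSubterm u t → P u) (n + 1)) =
      1 + #(ofSize P n) + ∑ p ∈ antidiagonal n, #(ofSize P p.1) * #(ofSize P p.2) := by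
  classical
  have app_injective : (Function.uncurry app).Injective := by
    rintro ⟨M, N⟩ ⟨M', N'⟩ h
    simpa using h
  have abs_injective : abs.Injective := fun M M' h ↦ by simpa using h
  rw [ofSize_forall_directSubterm_succ, card_insert_of_notMem (by simp),
    card_union_of_disjoint (by grind [Finset.disjoint_left]),
    card_image_of_injective _ abs_injective, card_image_of_injective _ app_injective,
    card_biUnion_antidiagonal_ofSize]
  ring

lemma ofSize_not_subterm [DecidableEq Term] (M : Term) (n : ℕ) :
    ofSize (fun t ↦ ¬ Subterm M t) n =
      (ofSize (fun t ↦ ∀ u, DirectSubterm u t → ¬ Subterm M u) n).erase M := by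
  ext t
  rw [mem_erase, mem_ofSize, mem_ofSize, not_subterm_iff, and_assoc]

lemma card_ofSize_not_subterm (M : Term) (n : ℕ) :
    #(ofSize (fun t ↦ ¬ Subterm M t) n) + (if n = M.size then 1 else 0) =
      #(ofSize (fun t ↦ ∀ u, DirectSubterm u t → ¬ Subterm M u) n) := by
  classical
  have hM : ∀ u, DirectSubterm u M → ¬ Subterm M u := fun u hu h ↦ hu.size_lt.not_ge h.size_le
  rw [ofSize_not_subterm]
  split_ifs with hsize
  · exact card_erase_add_one (mem_ofSize.2 ⟨hM, hsize.symm⟩)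
  · rw [erase_eq_of_notMem fun h ↦ hsize (mem_ofSize.1 h).2.symm, add_zero]

lemma isUnaryBinaryCount_L : IsUnaryBinaryCount (fun _ ↦ 1) fun n ↦ (L n : ℝ) where
  zero := by rw [← card_ofSize_true, ofSize_zero, card_empty, Nat.cast_zero]
  succ n := by
    have h := card_ofSize_forall_directSubterm_succ (fun _ ↦ True) n
    simp only [implies_true, card_ofSize_true] at h
    exact_mod_cast h

lemma isUnaryBinaryCount_not_subterm (M : Term) :
    IsUnaryBinaryCount (fun n ↦ if n + 1 = M.size then 0 else 1)
      fun n ↦ (#(ofSize (fun t ↦ ¬ Subterm M t) n) : ℝ) where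
  zero := by rw [ofSize_zero, card_empty, Nat.cast_zero]
  succ n := by
    have h := card_ofSize_not_subterm M (n + 1)
    rw [card_ofSize_forall_directSubterm_succ] at h
    split_ifs at h ⊢ <;> rify at h <;> linarith

lemma card_ofSize_not_subterm_isLittleO (M : Term) :
    (fun n ↦ (#(ofSize (fun t ↦ ¬ Subterm M t) n) : ℝ)) =o[atTop] fun n ↦ (L n : ℝ) := by
  obtain ⟨s, hs⟩ : ∃ s, M.size = s + 1 := Nat.exists_eq_add_one.2 M.size_pos
  obtain ⟨r, hr, hroot⟩ := exists_discrim_eq_zero s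
  obtain ⟨x, hx, hneg⟩ := exists_discrim_neg_of_discrim_eq_zero hr hroot
  have avoiding := isUnaryBinaryCount_not_subterm M
  simp only [hs, Nat.add_right_cancel_iff] at avoiding
  have upper_bound :
      (fun n ↦ (#(ofSize (fun t ↦ ¬ Subterm M t) n) : ℝ)) =O[atTop] fun n ↦ r⁻¹ ^ n :=
    avoiding.isBigO_inv_pow_of_discrim_nonneg (fun n ↦ by positivity) hr.1 hr.2.le
      (hasSum_ite_eq_zero_one_mul_pow hr.1.le hr.2 s) hroot.ge
  have not_summable : ¬ Summable fun n ↦ (L n : ℝ) * x ^ n := fun hsum ↦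
    hneg.not_ge <| isUnaryBinaryCount_L.discrim_nonneg_of_summable
      (by simpa using hasSum_geometric_of_lt_one hx.1.le (hx.2.trans hr.2)) hsum
  have hone : (0 : ℕ → ℝ) ≤ fun _ ↦ 1 := fun _ ↦ zero_le_one
  exact upper_bound.trans_isLittleO <| inv_pow_isLittleO_of_not_summable
    (isUnaryBinaryCount_L.nonneg hone) (isUnaryBinaryCount_L.monotone hone)
    (isUnaryBinaryCount_L.mul_le hone) hx.1.le hx.2 hr.2.le not_summable

lemma eventually_L_ne_zero : ∀ᶠ n in atTop, (L n : ℝ) ≠ 0 := by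
  filter_upwards [eventually_ge_atTop 1] with n hn
  obtain ⟨k, rfl⟩ := Nat.exists_eq_add_of_le' hn
  exact (one_pos.trans_le (isUnaryBinaryCount_L.apply_le_succ (fun _ ↦ zero_le_one) k)).ne'

end Term

theorem density_containing_subterm_one (M₀ : Term) :
    Filter.Tendsto
      (fun n : ℕ =>
        (Nat.card {t : Term // Subterm M₀ t ∧ t.size = n} : ℝ) / (L n : ℝ))
      Filter.atTop (nhds 1) := by
  refine (isEquivalent_iff_tendsto_one Term.eventually_L_ne_zero).1 ?_
  refine (Term.card_ofSize_not_subterm_isLittleO M₀).neg_left.congr_left fun n ↦ ?_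
  have hcard : (#(Term.ofSize (Subterm M₀) n) : ℝ) + #(Term.ofSize (fun t ↦ ¬ Subterm M₀ t) n) =
      L n := mod_cast Term.card_ofSize_add_card_ofSize_not (Subterm M₀) n
  rw [Pi.sub_apply, ← Term.card_ofSize, ← hcard]
  ring
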